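/- Let x be a random vector on ℝ^d with law N(0_d, Σ_x) and ε an independent random vector with law N(0_d, Σ_y), where Σ_x and Σ_y are positive definite, let A ∈ ℝ^{d×d}, and set y = A x + ε and D = (Aᵀ Σ_y⁻¹ A + Σ_x⁻¹)⁻¹ Aᵀ Σ_y⁻¹. Then the random vector x − D y is independent of y, and its law is the multivariate Gaussian N(0_d, (Aᵀ Σ_y⁻¹ A + Σ_x⁻¹)⁻¹). Consequently, the conditional distribution of x given y is N(D y, (Aᵀ Σ_y⁻¹ A + Σ_x⁻¹)⁻¹), and in particular E[x | y] = D y almost surely. -/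

import Mathlib

open MeasureTheory ProbabilityTheory Matrix

/-- Multivariate Gaussian measure `N(m, S)` on `ℝ^d = (Fin d → ℝ)`, defined by its density
with respect to Lebesgue measure (intended for positive definite covariance `S`). -/
noncomputable def mvGaussian (d : ℕ) (m : Fin d → ℝ) (S : Matrix (Fin d) (Fin d) ℝ) :
    Measure (Fin d → ℝ) :=
  volume.withDensity fun x =>
    ENNReal.ofReal ((2 * Real.pi) ^ (-(d : ℝ) / 2) * S.det ^ (-(1 : ℝ) / 2) *
      Real.exp (-((x - m) ⬝ᵥ (S⁻¹ *ᵥ (x - m))) / 2))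

lemma map_withDensity_comp {α β : Type*} [MeasurableSpace α] [MeasurableSpace β] (μ : Measure α)
    {g : α → β} (hg : Measurable g) {f : β → ENNReal} (hf : Measurable f) :
    (μ.withDensity (f ∘ g)).map g = (μ.map g).withDensity f := by
  ext s hs
  rw [Measure.map_apply hg hs, withDensity_apply _ (hg hs), withDensity_apply _ hs,
    setLIntegral_map hs hf hg]
  rfl

lemma pi_withDensity_ofReal {ι E : Type*} [Fintype ι] [MeasurableSpace E] (μ : Measure E)
    [SigmaFinite μ] {f : E → ℝ} (hf : Integrable f μ) (hf0 : 0 ≤ f) :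
    Measure.pi (fun _ : ι => μ.withDensity fun t => ENNReal.ofReal (f t)) =
      (Measure.pi fun _ : ι => μ).withDensity fun u => ENNReal.ofReal (∏ i, f (u i)) := by
  refine Measure.pi_eq fun s hs => ?_
  rw [withDensity_apply _ (MeasurableSet.univ_pi hs), Measure.restrict_pi_pi,
    ← ofReal_integral_eq_lintegral_ofReal
      (Integrable.fintype_prod (f := fun _ => f) fun i => hf.restrict)
      (ae_of_all _ fun u => Finset.prod_nonneg fun i _ => hf0 (u i)),
    integral_fintype_prod_eq_prod (fun _ => f),
    ENNReal.ofReal_prod_of_nonneg fun i _ => integral_nonneg hf0]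
  refine Finset.prod_congr rfl fun i _ => ?_
  rw [withDensity_apply _ (hs i),
    ofReal_integral_eq_lintegral_ofReal hf.restrict (ae_of_all _ hf0)]

lemma mvGaussian_zero_one (d : ℕ) :
    mvGaussian d 0 1 = Measure.pi fun _ : Fin d => gaussianReal 0 1 := by
  have hpdf : gaussianReal 0 1 =
      (volume : Measure ℝ).withDensity fun t => ENNReal.ofReal (gaussianPDFReal 0 1 t) :=
    gaussianReal_of_var_ne_zero 0 one_ne_zero
  rw [hpdf, pi_withDensity_ofReal _ (integrable_gaussianPDFReal 0 1)
    (fun t => gaussianPDFReal_nonneg 0 1 t), mvGaussian]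
  have h2π : (0 : ℝ) ≤ 2 * Real.pi := by positivity
  have hconst : (2 * Real.pi) ^ (-(d : ℝ) / 2) = (√(2 * Real.pi))⁻¹ ^ d := by
    rw [Real.sqrt_eq_rpow, ← Real.rpow_neg h2π, ← Real.rpow_natCast, ← Real.rpow_mul h2π]
    congr 1
    ring
  congr 1
  ext u
  simp only [gaussianPDFReal, Finset.prod_mul_distrib, ← Real.exp_sum, hconst]
  simp [dotProduct, neg_div, Finset.sum_div, pow_two]

/-- The density of `mvGaussian d m S`. -/
noncomputable def mvGaussianDensity (d : ℕ) (m : Fin d → ℝ) (S : Matrix (Fin d) (Fin d) ℝ)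
    (x : Fin d → ℝ) : ℝ :=
  (2 * Real.pi) ^ (-(d : ℝ) / 2) * S.det ^ (-(1 : ℝ) / 2) *
    Real.exp (-((x - m) ⬝ᵥ (S⁻¹ *ᵥ (x - m))) / 2)

lemma mvGaussian_eq_withDensity (d : ℕ) (m : Fin d → ℝ) (S : Matrix (Fin d) (Fin d) ℝ) :
    mvGaussian d m S = volume.withDensity fun x => ENNReal.ofReal (mvGaussianDensity d m S x) :=
  rfl

@[fun_prop]
lemma continuous_mvGaussianDensity (d : ℕ) (m : Fin d → ℝ) (S : Matrix (Fin d) (Fin d) ℝ) :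
    Continuous (mvGaussianDensity d m S) := by
  unfold mvGaussianDensity
  fun_prop

@[fun_prop]
lemma measurable_mvGaussianDensity (d : ℕ) (m : Fin d → ℝ) (S : Matrix (Fin d) (Fin d) ℝ) :
    Measurable (mvGaussianDensity d m S) :=
  (continuous_mvGaussianDensity d m S).measurable

lemma map_add_right_mvGaussian (d : ℕ) (m : Fin d → ℝ) (S : Matrix (Fin d) (Fin d) ℝ) :
    (mvGaussian d 0 S).map (· + m) = mvGaussian d m S := by
  have hcomp : (fun x => ENNReal.ofReal (mvGaussianDensity d 0 S x)) =
      (fun x => ENNReal.ofReal (mvGaussianDensity d m S x)) ∘ (· + m) := by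
    ext x
    simp [mvGaussianDensity]
  rw [mvGaussian_eq_withDensity, hcomp, map_withDensity_comp _ (by fun_prop) (by fun_prop),
    map_add_right_eq_self, mvGaussian_eq_withDensity]

lemma map_mulVec_mvGaussian_zero_one {d : ℕ} {T : Matrix (Fin d) (Fin d) ℝ} (hT : T.det ≠ 0) :
    (mvGaussian d 0 1).map (T *ᵥ ·) = mvGaussian d 0 (T * Tᵀ) := by
  have hTu : IsUnit T.det := hT.isUnit
  have hdet : (T * Tᵀ).det ^ (-(1 : ℝ) / 2) = |T.det⁻¹| := by
    rw [det_mul, det_transpose, abs_inv, ← abs_mul_abs_self, ← pow_two, ← Real.rpow_natCast,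
      ← Real.rpow_mul (abs_nonneg _), ← Real.rpow_neg_one]
    norm_num
  have hcomp : (fun x => ENNReal.ofReal (mvGaussianDensity d 0 1 x)) =
      (fun x => ENNReal.ofReal (mvGaussianDensity d 0 1 (T⁻¹ *ᵥ x))) ∘ (T *ᵥ ·) := by
    ext x
    simp [mulVec_mulVec, nonsing_inv_mul _ hTu]
  have hmap : (volume : Measure (Fin d → ℝ)).map (T *ᵥ ·) = ENNReal.ofReal |T.det⁻¹| • volume :=
    Real.map_matrix_volume_pi_eq_smul_volume_pi hT
  have hmeas : Measurable fun x => ENNReal.ofReal (mvGaussianDensity d 0 1 (T⁻¹ *ᵥ x)) :=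
    Measurable.ennreal_ofReal (Continuous.measurable (by fun_prop))
  rw [mvGaussian_eq_withDensity, hcomp,
    map_withDensity_comp _ (Continuous.measurable (by fun_prop)) hmeas,
    hmap, withDensity_smul_measure, ← withDensity_smul _ hmeas, mvGaussian_eq_withDensity]
  congr 1
  ext x
  simp only [Pi.smul_apply, smul_eq_mul]
  rw [← ENNReal.ofReal_mul (abs_nonneg _)]
  have hquad : x ⬝ᵥ ((T * Tᵀ)⁻¹ *ᵥ x) = (T⁻¹ *ᵥ x) ⬝ᵥ (T⁻¹ *ᵥ x) := by
    rw [Matrix.mul_inv_rev, ← mulVec_mulVec, ← transpose_nonsing_inv, mulVec_transpose,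
      dotProduct_comm x, ← dotProduct_mulVec]
  simp only [mvGaussianDensity, sub_zero, hquad, hdet, det_one, Real.one_rpow, inv_one, one_mulVec]
  ring_nf

open scoped MatrixOrder in
lemma exists_mul_transpose_of_posDef {n : Type*} [Fintype n] [DecidableEq n] {S : Matrix n n ℝ}
    (hS : S.PosDef) : ∃ T : Matrix n n ℝ, T.det ≠ 0 ∧ S = T * Tᵀ := by
  obtain ⟨B, hB⟩ := CStarAlgebra.nonneg_iff_eq_star_mul_self.mp hS.posSemidef.nonneg
  rw [star_eq_conjTranspose, conjTranspose_eq_transpose_of_trivial] at hB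
  refine ⟨Bᵀ, fun h => hS.det_pos.ne' ?_, by rw [hB, transpose_transpose]⟩
  rw [hB, det_mul, h, zero_mul]

lemma exists_mvGaussian_eq_map_stdGaussian {d : ℕ} {S : Matrix (Fin d) (Fin d) ℝ}
    (hS : S.PosDef) : ∃ L : EuclideanSpace ℝ (Fin d) →L[ℝ] (Fin d → ℝ),
      mvGaussian d 0 S = (stdGaussian (EuclideanSpace ℝ (Fin d))).map L := by
  obtain ⟨T, hT, rfl⟩ := exists_mul_transpose_of_posDef hS
  refine ⟨(T.mulVecLin.toContinuousLinearMap).comp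
    (EuclideanSpace.equiv (Fin d) ℝ).toContinuousLinearMap, ?_⟩
  rw [← map_mulVec_mvGaussian_zero_one hT, mvGaussian_zero_one, ← map_pi_eq_stdGaussian,
    Measure.map_map (by fun_prop) (by fun_prop)]
  rfl

lemma isGaussian_mvGaussian {d : ℕ} {S : Matrix (Fin d) (Fin d) ℝ} (hS : S.PosDef) :
    IsGaussian (mvGaussian d 0 S) := by
  obtain ⟨L, hL⟩ := exists_mvGaussian_eq_map_stdGaussian hS
  rw [hL]
  infer_instance

lemma integral_id_mvGaussian {d : ℕ} {S : Matrix (Fin d) (Fin d) ℝ} (hS : S.PosDef) :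
    ∫ x, x ∂(mvGaussian d 0 S) = 0 := by
  obtain ⟨L, hL⟩ := exists_mvGaussian_eq_map_stdGaussian hS
  rw [hL, L.integral_id_map IsGaussian.integrable_id, integral_id_stdGaussian, map_zero]

lemma measurePreserving_add_mulVec_sub_mulVec {d : ℕ} (A D : Matrix (Fin d) (Fin d) ℝ) :
    MeasurePreserving (fun p : (Fin d → ℝ) × (Fin d → ℝ) =>
      (A *ᵥ p.1 + p.2, p.1 - D *ᵥ (A *ᵥ p.1 + p.2))) (volume.prod volume)
      (volume.prod volume) := by
  have hA : MeasurePreserving (fun p : (Fin d → ℝ) × (Fin d → ℝ) => (p.1, A *ᵥ p.1 + p.2))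
      (volume.prod volume) (volume.prod volume) :=
    (MeasurePreserving.id volume).skew_product (g := fun x e => A *ᵥ x + e)
      (Continuous.measurable (by fun_prop)) (ae_of_all _ fun x => map_add_left_eq_self _ _)
  have hD : MeasurePreserving (fun p : (Fin d → ℝ) × (Fin d → ℝ) => (p.1, p.2 - D *ᵥ p.1))
      (volume.prod volume) (volume.prod volume) :=
    (MeasurePreserving.id volume).skew_product (g := fun y x => x - D *ᵥ y)
      (Continuous.measurable (by fun_prop)) (ae_of_all _ fun x => map_sub_right_eq_self _ _)
  exact hD.comp (Measure.measurePreserving_swap.comp hA)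

lemma dotProduct_mulVec_completing_square {n : Type*} [Fintype n]
    {A D M Q R : Matrix n n ℝ} (hQ : Qᵀ = Q) (hMsymm : Mᵀ = M) (hM : M = Aᵀ * Q * A + R)
    (hMD : M * D = Aᵀ * Q) (x y : n → ℝ) :
    x ⬝ᵥ (R *ᵥ x) + (y - A *ᵥ x) ⬝ᵥ (Q *ᵥ (y - A *ᵥ x)) =
      (x - D *ᵥ y) ⬝ᵥ (M *ᵥ (x - D *ᵥ y)) + y ⬝ᵥ ((Q - Dᵀ * M * D) *ᵥ y) := by
  have hadj (B : Matrix n n ℝ) (v w : n → ℝ) : (B *ᵥ v) ⬝ᵥ w = v ⬝ᵥ (Bᵀ *ᵥ w) := by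
    rw [dotProduct_mulVec, vecMul_transpose]
  have hyx : y ⬝ᵥ (Q * A) *ᵥ x = x ⬝ᵥ (Aᵀ * Q) *ᵥ y := by
    rw [dotProduct_comm, hadj, transpose_mul, hQ]
  have hDM : Dᵀ * M = Q * A := by
    rw [← transpose_transpose (Dᵀ * M), transpose_mul, hMsymm, transpose_transpose, hMD,
      transpose_mul, hQ, transpose_transpose]
  have hDAQ : Dᵀ * (Aᵀ * Q) = Q * A * D := by
    rw [← hMD, ← Matrix.mul_assoc, hDM]
  simp only [mulVec_sub, sub_dotProduct, dotProduct_sub, hadj, mulVec_mulVec, hMD, hDM, sub_mulVec]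
  rw [hDAQ, ← Matrix.mul_assoc Aᵀ Q A, hyx, hM, add_mulVec, dotProduct_add]
  ring

lemma mvGaussianDensity_pos {d : ℕ} {S : Matrix (Fin d) (Fin d) ℝ} (hS : S.PosDef)
    (m x : Fin d → ℝ) : 0 < mvGaussianDensity d m S x := by
  have := hS.det_pos
  unfold mvGaussianDensity
  positivity

/-- The joint law of `y = A x + e` and `x - D y` for independent Gaussian `x` and `e` is a product
whose second factor is the Gaussian law of the residual. -/
lemma exists_map_prod_mvGaussian_eq {d : ℕ} {Sx Sy A M D : Matrix (Fin d) (Fin d) ℝ}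
    (hSx : Sx.PosDef) (hSy : Sy.PosDef) (hMpos : M.PosDef) (hM : M = Aᵀ * Sy⁻¹ * A + Sx⁻¹)
    (hMD : M * D = Aᵀ * Sy⁻¹) :
    ∃ ν : Measure (Fin d → ℝ), SFinite ν ∧
      ((mvGaussian d 0 Sx).prod (mvGaussian d 0 Sy)).map
        (fun p => (A *ᵥ p.1 + p.2, p.1 - D *ᵥ (A *ᵥ p.1 + p.2))) =
      ν.prod (mvGaussian d 0 M⁻¹) := by
  set k : (Fin d → ℝ) → ℝ := fun y =>
    mvGaussianDensity d 0 Sx 0 * mvGaussianDensity d 0 Sy 0 / mvGaussianDensity d 0 M⁻¹ 0 *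
      Real.exp (-(y ⬝ᵥ ((Sy⁻¹ - Dᵀ * M * D) *ᵥ y)) / 2) with hk
  have hkmeas : Measurable k := Continuous.measurable (by fun_prop)
  refine ⟨volume.withDensity fun y => ENNReal.ofReal (k y), inferInstance, ?_⟩
  have hsplit {S : Matrix (Fin d) (Fin d) ℝ} (x : Fin d → ℝ) : mvGaussianDensity d 0 S x =
      mvGaussianDensity d 0 S 0 * Real.exp (-(x ⬝ᵥ (S⁻¹ *ᵥ x)) / 2) := by
    simp [mvGaussianDensity]
  have hprod (x e : Fin d → ℝ) : mvGaussianDensity d 0 Sx x * mvGaussianDensity d 0 Sy e =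
      k (A *ᵥ x + e) * mvGaussianDensity d 0 M⁻¹ (x - D *ᵥ (A *ᵥ x + e)) := by
    have hsq := dotProduct_mulVec_completing_square (A := A) (D := D) (M := M) (Q := Sy⁻¹)
      hSy.inv.isHermitian.eq hMpos.isHermitian.eq hM hMD x (A *ᵥ x + e)
    rw [add_sub_cancel_left] at hsq
    have hne := (mvGaussianDensity_pos hMpos.inv 0 0).ne'
    rw [hsplit x, hsplit e, hsplit (x - _), hk, nonsing_inv_nonsing_inv _ hMpos.det_pos.ne'.isUnit]
    calc _ = mvGaussianDensity d 0 Sx 0 * mvGaussianDensity d 0 Sy 0 *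
          Real.exp (-(x ⬝ᵥ (Sx⁻¹ *ᵥ x) + e ⬝ᵥ (Sy⁻¹ *ᵥ e)) / 2) := by
          rw [neg_add, add_div, Real.exp_add]
          ring
      _ = _ := by
          rw [hsq, neg_add, add_div, Real.exp_add]
          field_simp
  simp only [mvGaussian_eq_withDensity]
  rw [prod_withDensity (by fun_prop) (by fun_prop), prod_withDensity (by fun_prop) (by fun_prop)]
  have hcomp : (fun z : (Fin d → ℝ) × (Fin d → ℝ) => ENNReal.ofReal (mvGaussianDensity d 0 Sx z.1) *
        ENNReal.ofReal (mvGaussianDensity d 0 Sy z.2)) =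
      (fun z => ENNReal.ofReal (k z.1) * ENNReal.ofReal (mvGaussianDensity d 0 M⁻¹ z.2)) ∘
        fun p => (A *ᵥ p.1 + p.2, p.1 - D *ᵥ (A *ᵥ p.1 + p.2)) := by
    ext z
    simp only [Function.comp_apply]
    rw [← ENNReal.ofReal_mul (mvGaussianDensity_pos hSx _ _).le, hprod,
      ENNReal.ofReal_mul' (mvGaussianDensity_pos hMpos.inv _ _).le]
  have hmp := measurePreserving_add_mulVec_sub_mulVec A D
  rw [hcomp, map_withDensity_comp _ hmp.measurable (by fun_prop), hmp.map_eq]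

/-- If `y` and `z` have joint law `ν ⊗ μ` with `μ` a probability measure, then they are independent
and `z` has law `μ`. -/
lemma indepFun_and_map_eq_of_map_prod_eq {Ω α β : Type*} [MeasurableSpace Ω] [MeasurableSpace α]
    [MeasurableSpace β] {P : Measure Ω} [IsProbabilityMeasure P] {y : Ω → α} {z : Ω → β}
    (hy : Measurable y) (hz : Measurable z) {ν : Measure α} [SFinite ν] {μ : Measure β}
    [IsProbabilityMeasure μ] (h : P.map (fun ω => (y ω, z ω)) = ν.prod μ) :
    IndepFun z y P ∧ P.map z = μ := by
  have hyν : P.map y = ν := by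
    rw [← Measure.fst_map_prodMk (X := y) hz, h, Measure.fst_prod]
  have : IsProbabilityMeasure ν := hyν ▸ Measure.isProbabilityMeasure_map hy.aemeasurable
  have hzμ : P.map z = μ := by
    rw [← Measure.snd_map_prodMk (Y := z) hy, h, Measure.snd_prod]
  refine ⟨IndepFun.symm ?_, hzμ⟩
  rw [indepFun_iff_map_prod_eq_prod_map_map hy.aemeasurable hz.aemeasurable, h, hyν, hzμ]

/-- If `z` is independent of `y`, then the conditional distribution of `z + f y` given `y` is the
law of `z` translated by `f y`. -/
lemma condDistrib_add_of_indepFun {Ω α E : Type*} [MeasurableSpace Ω] [MeasurableSpace α]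
    [MeasurableSpace E] [StandardBorelSpace E] [Nonempty E] [Add E] [MeasurableAdd₂ E]
    {P : Measure Ω} [IsProbabilityMeasure P] {y : Ω → α} {z : Ω → E} (hy : Measurable y)
    (hz : Measurable z) (hzy : IndepFun z y P) {f : α → E} (hf : Measurable f) :
    ∀ᵐ ω ∂P, condDistrib (fun ω => z ω + f (y ω)) y P (y ω) =
      (P.map z).map (· + f (y ω)) := by
  have : IsProbabilityMeasure (P.map z) := Measure.isProbabilityMeasure_map hz.aemeasurable
  have hshear : Measurable fun p : α × E => (p.1, p.2 + f p.1) := by fun_prop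
  have hadd : Measurable fun p : α × E => p.2 + f p.1 := by fun_prop
  set κ : Kernel α E := (Kernel.id ×ₖ Kernel.const α (P.map z)).map fun p => p.2 + f p.1
  have hκ (a : α) : κ a = (P.map z).map (· + f a) := by
    rw [Kernel.map_apply _ hadd, Kernel.prod_apply, Kernel.id_apply, Kernel.const_apply,
      Measure.dirac_prod, Measure.map_map hadd (by fun_prop)]
    rfl
  have : IsFiniteKernel κ := Kernel.IsFiniteKernel.map _ _
  have hjoint : P.map (fun ω => (y ω, z ω + f (y ω))) = P.map y ⊗ₘ κ := by
    have hyz := (indepFun_iff_map_prod_eq_prod_map_map hy.aemeasurable hz.aemeasurable).mp hzy.symm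
    ext s hs
    rw [Measure.compProd_apply hs]
    simp_rw [hκ]
    have hcomp : (fun ω => (y ω, z ω + f (y ω))) =
        (fun p : α × E => (p.1, p.2 + f p.1)) ∘ fun ω => (y ω, z ω) := rfl
    rw [hcomp, ← Measure.map_map hshear (by fun_prop), hyz, Measure.map_apply hshear hs,
      Measure.prod_apply (hshear hs)]
    refine lintegral_congr fun a => ?_
    rw [Measure.map_apply (by fun_prop) (measurable_prodMk_left hs)]
    rfl
  have hae := condDistrib_ae_eq_of_measure_eq_compProd_of_measurable (μ := P) hy
    (Y := fun ω => z ω + f (y ω)) (by fun_prop) hjoint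
  filter_upwards [ae_of_ae_map hy.aemeasurable hae] with ω hω
  rw [hω, hκ]

/-- Let `x ~ N(0, Sx)` and `ε ~ N(0, Sy)` be independent on `ℝ^d`, with `Sx, Sy`
positive definite, `A : ℝ^{d×d}`, `y = A x + ε`, and `D = (Aᵀ Sy⁻¹ A + Sx⁻¹)⁻¹ Aᵀ Sy⁻¹`.
Then `x − D y` is independent of `y` with law `N(0, (Aᵀ Sy⁻¹ A + Sx⁻¹)⁻¹)`; consequently the
conditional distribution of `x` given `y` is `N(D y, (Aᵀ Sy⁻¹ A + Sx⁻¹)⁻¹)` and in particular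
`E[x | y] = D y` almost surely. -/
theorem stmt4 {d : ℕ} {Ω : Type*} [MeasurableSpace Ω] (P : Measure Ω) [IsProbabilityMeasure P]
    (Sx Sy A : Matrix (Fin d) (Fin d) ℝ) (hSx : Sx.PosDef) (hSy : Sy.PosDef)
    (x ε : Ω → Fin d → ℝ) (hx : Measurable x) (hε : Measurable ε)
    (hindep : IndepFun x ε P)
    (hxlaw : P.map x = mvGaussian d 0 Sx) (hεlaw : P.map ε = mvGaussian d 0 Sy)
    (y : Ω → Fin d → ℝ) (hy : y = fun ω => A *ᵥ x ω + ε ω)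
    (D : Matrix (Fin d) (Fin d) ℝ) (hD : D = (Aᵀ * Sy⁻¹ * A + Sx⁻¹)⁻¹ * Aᵀ * Sy⁻¹) :
    IndepFun (fun ω => x ω - D *ᵥ y ω) y P ∧
    P.map (fun ω => x ω - D *ᵥ y ω) = mvGaussian d 0 (Aᵀ * Sy⁻¹ * A + Sx⁻¹)⁻¹ ∧
    (∀ᵐ ω ∂P, condDistrib x y P (y ω)
      = mvGaussian d (D *ᵥ y ω) (Aᵀ * Sy⁻¹ * A + Sx⁻¹)⁻¹) ∧
    P[x | MeasurableSpace.comap y inferInstance] =ᵐ[P] (fun ω => D *ᵥ y ω) := by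
  set M := Aᵀ * Sy⁻¹ * A + Sx⁻¹ with hM
  have hMpos : M.PosDef := by
    have hQ := hSy.inv.posSemidef.conjTranspose_mul_mul_same A
    rw [conjTranspose_eq_transpose_of_trivial] at hQ
    exact PosDef.posSemidef_add hQ hSx.inv
  have hMD : M * D = Aᵀ * Sy⁻¹ := by
    rw [hD, Matrix.mul_assoc, mul_nonsing_inv_cancel_left _ _ hMpos.det_pos.ne'.isUnit]
  have hmul (B : Matrix (Fin d) (Fin d) ℝ) : Measurable (B *ᵥ ·) :=
    Continuous.measurable (by fun_prop)
  have hymeas : Measurable y := hy ▸ ((hmul A).comp hx).add hε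
  have hDy : Measurable fun ω => D *ᵥ y ω := (hmul D).comp hymeas
  have hzmeas : Measurable fun ω => x ω - D *ᵥ y ω := hx.sub hDy
  have hGz := isGaussian_mvGaussian hMpos.inv
  obtain ⟨ν, hν, hmap⟩ := exists_map_prod_mvGaussian_eq hSx hSy hMpos hM hMD
  have hjoint : P.map (fun ω => (y ω, x ω - D *ᵥ y ω)) = ν.prod (mvGaussian d 0 M⁻¹) := by
    have hxε := (indepFun_iff_map_prod_eq_prod_map_map hx.aemeasurable hε.aemeasurable).mp hindep
    rw [← hmap, ← hxlaw, ← hεlaw, ← hxε, Measure.map_map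
      (Continuous.measurable (by fun_prop)) (hx.prodMk hε), hy]
    rfl
  obtain ⟨hzy, hzlaw⟩ := indepFun_and_map_eq_of_map_prod_eq hymeas hzmeas hjoint
  refine ⟨hzy, hzlaw, ?_, ?_⟩
  · have hcond := condDistrib_add_of_indepFun hymeas hzmeas hzy (hmul D)
    simpa only [sub_add_cancel, hzlaw, map_add_right_mvGaussian] using hcond
  · have hGx := isGaussian_mvGaussian hSx
    have hxint : Integrable x P :=
      (hxlaw ▸ IsGaussian.integrable_id : Integrable id (P.map x)).comp_measurable hx
    have hzint : Integrable (fun ω => x ω - D *ᵥ y ω) P :=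
      (hzlaw ▸ IsGaussian.integrable_id :
        Integrable id (P.map fun ω => x ω - D *ᵥ y ω)).comp_measurable hzmeas
    have hDyint : Integrable (fun ω => D *ᵥ y ω) P := by
      simpa only [Pi.sub_def, sub_sub_cancel] using hxint.sub hzint
    have hzmean : ∫ ω, (x ω - D *ᵥ y ω) ∂P = 0 := by
      rw [← integral_id_mvGaussian hMpos.inv, ← hzlaw,
        integral_map hzmeas.aemeasurable (by fun_prop)]
    have hcondz := condExp_indep_eq hzmeas.comap_le hymeas.comap_le
      (comap_measurable _).stronglyMeasurable hzy
    have hcondDy := condExp_of_stronglyMeasurable hymeas.comap_le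
      ((hmul D).comp (comap_measurable y)).stronglyMeasurable hDyint
    have hadd := condExp_add hzint hDyint (MeasurableSpace.comap y inferInstance)
    have hsum : (fun ω => x ω - D *ᵥ y ω) + (fun ω => D *ᵥ y ω) = x := by
      ext1 ω
      simp
    rw [hsum] at hadd
    filter_upwards [hadd, hcondz] with ω h₁ h₂
    rw [h₁, Pi.add_apply, h₂, hzmean, zero_add]
    exact congrFun hcondDy ω
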